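/- Let E = {r¹,...,rᵉ} ⊆ ℤ² (e ≥ 4) be the set of lattice points, in order, on the compact edges of conv(σ^∨ ∩ ℤ² \ {0}) for a two-dimensional cone σ, satisfying r^{i-1} + r^{i+1} = a_i·r^i with integers a_i ≥ 2 for 2 ≤ i ≤ e-1. Suppose r^c is the central degree (so r¹ + rᵉ ∈ ℕ·r^c). If r^i, r^j ∈ E with i < c < j and (a_c - 1)·r^c - (r^i + r^j) ∈ σ^∨, then a contradiction follows; i.e., no two Hilbert basis elements r^i, r^j with i < c < j satisfy r^i + r^j ≤_{σ^∨} (a_c-1)·r^c. -/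

import Mathlib

/-- The standard pairing on ℤ². -/
def pairZ (a b : ℤ × ℤ) : ℤ := a.1 * b.1 + a.2 * b.2

/-- Membership in the dual cone σ^∨ of σ = ⟨α,β⟩. -/
def inDual (α β : ℤ × ℤ) (r : ℤ × ℤ) : Prop :=
  0 ≤ pairZ α r ∧ 0 ≤ pairZ β r

/-!
By the relation at `c`, `(a_c - 1) r^c - (r^i + r^j)` equals
`(r^{c-1} - r^c) + (r^{c+1} - r^j) - r^i`. A functional that is nonnegative at `r^i` and increases
along the sequence makes the first bracket negative and the other two summands nonpositive, so the
single ray `α` of `σ` already separates this vector from `σ^∨`.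
-/

theorem add_lt_add_of_strictMonoOn_Icc {G : Type*} [AddCommMonoid G] [PartialOrder G]
    [IsOrderedCancelAddMonoid G] {f : ℕ → G} {i c j : ℕ} (hf : StrictMonoOn f (Set.Icc i j))
    (hic : i < c) (hcj : c < j) : f (c - 1) + f (c + 1) < f c + f j := by
  have below : f (c - 1) < f c :=
    hf ⟨by lia, by lia⟩ ⟨hic.le, hcj.le⟩ (by lia)
  have above : f (c + 1) ≤ f j :=
    hf.monotoneOn ⟨by lia, hcj⟩ ⟨by lia, le_rfl⟩ hcj
  exact add_lt_add_of_lt_of_le below above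

theorem stmt17_general {R M G : Type*} [Ring R] [AddCommGroup M] [Module R M]
    [AddCommGroup G] [PartialOrder G] [IsOrderedAddMonoid G] (φ : M →+ G) {r : ℕ → M} {a : R}
    {i c j : ℕ} (hic : i < c) (hcj : c < j) (hi : 0 ≤ φ (r i))
    (hmono : ∀ n, i ≤ n → n < j → φ (r n) < φ (r (n + 1)))
    (hrel : r (c - 1) + r (c + 1) = a • r c) :
    φ ((a - 1) • r c - (r i + r j)) < 0 := by
  have strictMono : StrictMonoOn (fun n ↦ φ (r n)) (Set.Icc i j) :=
    strictMonoOn_of_lt_add_one Set.ordConnected_Icc fun n _ hn hn' ↦ hmono n hn.1 hn'.2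
  have neighbours : φ (r (c - 1)) + φ (r (c + 1)) < φ (r c) + φ (r j) :=
    add_lt_add_of_strictMonoOn_Icc strictMono hic hcj
  calc φ ((a - 1) • r c - (r i + r j))
      = φ (r (c - 1)) + φ (r (c + 1)) - (φ (r c) + φ (r j)) - φ (r i) := by
        rw [sub_smul, one_smul, ← hrel]
        simp only [map_sub, map_add]
        abel
    _ ≤ φ (r (c - 1)) + φ (r (c + 1)) - (φ (r c) + φ (r j)) := sub_le_self _ hi
    _ < 0 := sub_neg_of_lt neighbours

/-- The functional `⟨α, ·⟩` that a ray `α` of `σ` defines on ℤ², bundled as an additive homomorphism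
so that `map_add` and `map_sub` apply to it. -/
def pairZHom (α : ℤ × ℤ) : ℤ × ℤ →+ ℤ :=
  AddMonoidHom.mk' (pairZ α) fun x y ↦ by
    simp only [pairZ, Prod.fst_add, Prod.snd_add]
    ring

/-- let r¹,…,rᵉ (e ≥ 4) be the ordered Hilbert basis of
σ^∨ ∩ ℤ² (lattice points on the compact edges of conv(σ^∨ ∩ ℤ² \ {0})),
with r^{i-1} + r^{i+1} = a_i·r^i, a_i ≥ 2, and central index c
(so r¹ + rᵉ ∈ ℕ·r^c).  Then no pair r^i, r^j with i < c < j satisfies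
(a_c - 1)·r^c - (r^i + r^j) ∈ σ^∨. -/
theorem stmt17 (e : ℕ) (he : 4 ≤ e) (α β : ℤ × ℤ)
    (hdet : α.1 * β.2 - α.2 * β.1 ≠ 0)
    (r : ℕ → ℤ × ℤ) (a : ℕ → ℤ)
    -- all r^i belong to σ^∨ ∩ ℤ²
    (hdual : ∀ i, 1 ≤ i → i ≤ e → inDual α β (r i))
    -- r¹ and rᵉ lie on the two rays of σ^∨
    (hr1 : pairZ α (r 1) = 0) (hre : pairZ β (r e) = 0)
    -- the r^i are ordered along the boundary: ⟨α,·⟩ grows, ⟨β,·⟩ decreases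
    (hmonα : ∀ i, 1 ≤ i → i < e → pairZ α (r i) < pairZ α (r (i + 1)))
    (hmonβ : ∀ i, 1 ≤ i → i < e → pairZ β (r (i + 1)) < pairZ β (r i))
    -- consecutive elements form a ℤ-basis of ℤ²
    (hbasis : ∀ i, 1 ≤ i → i < e →
      |(r i).1 * (r (i + 1)).2 - (r i).2 * (r (i + 1)).1| = 1)
    -- the continued-fraction relations r^{i-1} + r^{i+1} = a_i · r^i, a_i ≥ 2
    (hrel : ∀ i, 2 ≤ i → i ≤ e - 1 →
      r (i - 1) + r (i + 1) = a i • r i ∧ 2 ≤ a i)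
    -- c is the central index: r¹ + rᵉ ∈ ℕ · r^c
    (c : ℕ) (hc1 : 1 < c) (hce : c < e)
    (hcentral : ∃ k : ℕ, r 1 + r e = (k : ℤ) • r c) :
    ¬ ∃ i j : ℕ, 1 ≤ i ∧ i < c ∧ c < j ∧ j ≤ e ∧
      inDual α β ((a c - 1) • r c - (r i + r j)) := by
  rintro ⟨i, j, hi, hic, hcj, hj, hα, -⟩
  exact hα.not_gt <| stmt17_general (pairZHom α) hic hcj (hdual i hi (by lia)).1
    (fun n hin hnj ↦ hmonα n (by lia) (by lia)) (hrel c (by lia) (by lia)).1
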